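/- arXiv:2204.00588 — 3 statements merged into one kernel-verified Lean document; each statement's English description precedes it below -/
import Mathlib

section
/- Consider the Markov kernel κ on the state space S = ℝ × [−Δ/2, Δ/2] that maps a state (e, d) to the law of (e₊, d₊), where e₊ is Gaussian with mean M(e, d) and variance W, d₊ is uniform on [−Δ/2, Δ/2], and e₊, d₊ are independent. Assume |R| < 1, W > 0, Δ > 0. Then κ admits an invariant probability measure π on S (i.e., π composed with κ equals π) which is equivalent to the Lebesgue measure on S: π is absolutely continuous with respect to Lebesgue measure with an everywhere strictly positive density, and Lebesgue measure is absolutely continuous with respect to π. -/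
/-!
The one-step map looks nonlinear, but after averaging over the uniform coordinate it is linear:
for every fixed `e`, if `d` is uniform on one quantization cell, then the quantization error of
`C e + d` is again uniform (`integral_quantization_error`). Hence the first coordinate is an
autoregressive chain `e₊ = R e + L u + w` with independent noises `u` uniform and `w` Gaussian
(`charFun_map_Mfun`). Since `|R| < 1` it has a stationary law `μ`: the law of `∑ Rᵏ L uₖ`
convolved with a Gaussian of variance `W / (1 - R²)`. Stationarity is checked on characteristic
functions (`exists_charFun_eq_mul_comp`, `exists_stationary`).

The next second coordinate is a fresh uniform variable, so `μ ⊗ unif Δ` is invariant for `κ`.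
By invariance `μ` is a mixture of Gaussians of variance `W > 0`, so it has an everywhere positive
density (`lintegral_gaussianReal_eq_withDensity`, `gaussianMixture_pos`), and equivalence with
Lebesgue measure on the strip follows.
-/

open MeasureTheory ProbabilityTheory Real Set Filter
open scoped ENNReal NNReal

noncomputable section

/-- Uniform quantizer with step `Δ`: `Qd Δ x = kΔ` whenever `x ∈ [kΔ - Δ/2, kΔ + Δ/2)`. -/
def Qd (Δ x : ℝ) : ℝ := Δ * ⌊x / Δ + 1 / 2⌋

/-- Uniform probability distribution on `[-Δ/2, Δ/2]`. -/
def unif (Δ : ℝ) : Measure ℝ :=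
  (ENNReal.ofReal Δ)⁻¹ • (volume.restrict (Set.Icc (-(Δ / 2)) (Δ / 2)))

/-- The drift map `M(e, d) = R·e − L·(Q_Δ(C·e + d) − d − C·e)`. -/
def Mfun (R L C Δ : ℝ) (p : ℝ × ℝ) : ℝ :=
  R * p.1 - L * (Qd Δ (C * p.1 + p.2) - p.2 - C * p.1)

/-- Lebesgue measure on the state space `S = ℝ × [-Δ/2, Δ/2]`. -/
def lebS (Δ : ℝ) : Measure (ℝ × ℝ) :=
  (volume : Measure ℝ).prod (volume.restrict (Set.Icc (-(Δ / 2)) (Δ / 2)))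

/-- The state space `S = ℝ × [-Δ/2, Δ/2]` as a subset of `ℝ × ℝ`. -/
def stateSet (Δ : ℝ) : Set (ℝ × ℝ) := Set.univ ×ˢ Set.Icc (-(Δ / 2)) (Δ / 2)

/-- For bounded noise `ν` and `|R| < 1`, the recursion `x₊ = R x + noise` has a stationary law, namely
the law of the series `∑ Rᵏ Zₖ` with `Zₖ` i.i.d. of law `ν`. Stationarity is expressed through
characteristic functions. -/
theorem exists_charFun_eq_mul_comp (ν : Measure ℝ) [IsProbabilityMeasure ν] {B R : ℝ}
    (hν : ∀ᵐ x ∂ν, |x| ≤ B) (hR : |R| < 1) :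
    ∃ ρ : Measure ℝ, IsProbabilityMeasure ρ ∧
      ∀ t, charFun ρ t = charFun ν t * charFun ρ (R * t) := by
  set P : Measure (ℕ → ℝ) := Measure.infinitePi (fun _ : ℕ => ν)
  set S : ℕ → (ℕ → ℝ) → ℝ := fun n ω => ∑ k ∈ Finset.range n, R ^ k * ω k
  set X : (ℕ → ℝ) → ℝ := fun ω => ∑' k, R ^ k * ω k
  have hSm : ∀ n, Measurable (S n) := fun n => by fun_prop
  have hb : ∀ᵐ ω ∂P, ∀ k, |ω k| ≤ B := by
    rw [ae_all_iff]
    intro k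
    exact (measurePreserving_eval_infinitePi (fun _ : ℕ => ν) k).quasiMeasurePreserving.ae hν
  have hlim : ∀ᵐ ω ∂P, Tendsto (fun n => S n ω) atTop (nhds (X ω)) := by
    filter_upwards [hb] with ω hω
    have hs : Summable fun k => R ^ k * ω k := by
      refine Summable.of_norm_bounded
        ((summable_geometric_of_lt_one (abs_nonneg R) hR).mul_right B) fun k => ?_
      rw [norm_mul, norm_pow, Real.norm_eq_abs, Real.norm_eq_abs]
      exact mul_le_mul_of_nonneg_left (hω k) (by positivity)
    exact hs.hasSum.tendsto_sum_nat
  have hXm : AEMeasurable X P :=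
    aemeasurable_of_tendsto_metrizable_ae atTop (fun n => (hSm n).aemeasurable) hlim
  have hprod : ∀ n t, charFun (P.map (S n)) t = ∏ k ∈ Finset.range n, charFun ν (R ^ k * t) := by
    intro n t
    have hind : iIndepFun (fun (k : ℕ) (ω : ℕ → ℝ) => R ^ k * ω k) P :=
      iIndepFun_infinitePi (P := fun _ : ℕ => ν) (X := fun k x => R ^ k * x) (by fun_prop)
    have := (hind.restrict (Finset.range n)).charFun_map_fun_finsetSum_eq_prod
      (fun k _ => (show Measurable fun ω : ℕ → ℝ => R ^ k * ω k by fun_prop).aemeasurable)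
    rw [this, Finset.prod_apply]
    refine Finset.prod_congr rfl fun k _ => ?_
    rw [charFun_map_mul_comp (measurable_pi_apply k).aemeasurable, Measure.infinitePi_map_eval]
  have hchar : ∀ t, Tendsto (fun n => charFun (P.map (S n)) t) atTop
      (nhds (charFun (P.map X) t)) := by
    intro t
    simp only [charFun_apply_real]
    rw [integral_map hXm (by fun_prop)]
    simp_rw [fun n => integral_map (μ := P) (hSm n).aemeasurable
      (f := fun x : ℝ => Complex.exp (t * x * Complex.I)) (by fun_prop)]
    refine tendsto_integral_of_dominated_convergence (fun _ => 1)
      (fun n => Measurable.aestronglyMeasurable (by fun_prop)) (integrable_const _) (fun n => ?_) ?_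
    · refine ae_of_all _ fun ω => ?_
      rw [← Complex.ofReal_mul, Complex.norm_exp_ofReal_mul_I]
    · filter_upwards [hlim] with ω hω
      have hc : Continuous fun x : ℝ => Complex.exp (t * x * Complex.I) := by fun_prop
      exact (hc.tendsto _).comp hω
  refine ⟨P.map X, Measure.isProbabilityMeasure_map hXm, fun t => ?_⟩
  -- `Sₙ₊₁` is `Z₀` plus `R` times an independent copy of `Sₙ`; let `n → ∞`.
  refine tendsto_nhds_unique ((hchar t).comp (tendsto_add_atTop_nat 1))
    (((hchar (R * t)).const_mul (charFun ν t)).congr fun n => ?_)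
  simp only [Function.comp_apply, hprod]
  rw [Finset.prod_range_succ', mul_comm]
  simp [pow_succ, mul_assoc]

theorem measurable_Mfun (R L C Δ : ℝ) : Measurable (Mfun R L C Δ) := by
  unfold Mfun Qd
  have : Measurable fun p : ℝ × ℝ => ((⌊(C * p.1 + p.2) / Δ + 1 / 2⌋ : ℤ) : ℝ) :=
    measurable_from_top.comp (Int.measurable_floor.comp (by fun_prop))
  fun_prop

theorem isProbabilityMeasure_unif {Δ : ℝ} (hΔ : 0 < Δ) : IsProbabilityMeasure (unif Δ) := by
  constructor
  rw [unif, Measure.smul_apply, Measure.restrict_apply_univ, Real.volume_Icc, smul_eq_mul,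
    sub_neg_eq_add, add_halves]
  exact ENNReal.inv_mul_cancel (by simpa using hΔ) ENNReal.ofReal_ne_top

theorem integral_unif {Δ : ℝ} (hΔ : 0 < Δ) (f : ℝ → ℂ) :
    ∫ x, f x ∂(unif Δ) = Δ⁻¹ • ∫ x in (-(Δ / 2))..(Δ / 2), f x := by
  rw [unif, integral_smul_measure, intervalIntegral.integral_of_le (by linarith),
    integral_Icc_eq_integral_Ioc, ENNReal.toReal_inv, ENNReal.toReal_ofReal hΔ.le]

theorem Qd_add_step {Δ : ℝ} (hΔ : 0 < Δ) (x : ℝ) : Qd Δ (x + Δ) = Qd Δ x + Δ := by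
  have : (x + Δ) / Δ + 1 / 2 = x / Δ + 1 / 2 + 1 := by field_simp; ring
  rw [Qd, Qd, this, Int.floor_add_one]
  push_cast
  ring

theorem Qd_eq_zero {Δ : ℝ} (hΔ : 0 < Δ) {x : ℝ} (h1 : -(Δ / 2) ≤ x) (h2 : x < Δ / 2) :
    Qd Δ x = 0 := by
  have : ⌊x / Δ + 1 / 2⌋ = 0 := by
    have e : x / Δ + 1 / 2 = (x + Δ / 2) / Δ := by field_simp
    rw [Int.floor_eq_zero_iff, e]
    exact ⟨div_nonneg (by linarith) hΔ.le, (div_lt_one hΔ).2 (by linarith)⟩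
  rw [Qd, this, Int.cast_zero, mul_zero]

/-- The quantization error of `c + d`, with `d` uniform on one quantization cell, is uniform whatever
the value of `c`: `x - Qd Δ x` is `Δ`-periodic and equals `x` on the central cell. -/
theorem integral_quantization_error {Δ : ℝ} (hΔ : 0 < Δ) (f : ℝ → ℂ) (c : ℝ) :
    ∫ d, f (c + d - Qd Δ (c + d)) ∂(unif Δ) = ∫ x, f x ∂(unif Δ) := by
  have hper : Function.Periodic (fun x => f (x - Qd Δ x)) Δ := fun x => by
    simp only [Qd_add_step hΔ, add_sub_add_right_eq_sub]
  rw [integral_unif hΔ, integral_unif hΔ]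
  congr 1
  rw [intervalIntegral.integral_comp_add_left (fun x => f (x - Qd Δ x)) c]
  have h := hper.intervalIntegral_add_eq (c + -(Δ / 2)) (-(Δ / 2))
  rw [show c + -(Δ / 2) + Δ = c + Δ / 2 by ring, show -(Δ / 2) + Δ = Δ / 2 by ring] at h
  rw [h]
  refine intervalIntegral.integral_congr_ae ?_
  -- the endpoint `Δ / 2` is quantized to `Δ`, but is a null set
  filter_upwards [compl_mem_ae_iff.2 (measure_singleton (μ := volume) (Δ / 2))] with x hx hx'
  rw [uIoc_of_le (by linarith)] at hx'
  rw [Qd_eq_zero hΔ hx'.1.le (lt_of_le_of_ne hx'.2 hx), sub_zero]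

/-- If `d` is uniform and independent of `e`, then `M(e, d)` is distributed as `R e + L u` with `u`
uniform and independent of `e`, even though `M` depends on `e` through the quantizer. -/
theorem charFun_map_Mfun {Δ : ℝ} (hΔ : 0 < Δ) (R L C : ℝ) (μ : Measure ℝ)
    [IsProbabilityMeasure μ] (t : ℝ) :
    charFun ((μ.prod (unif Δ)).map (Mfun R L C Δ)) t =
      charFun μ (R * t) * charFun (unif Δ) (L * t) := by
  have := isProbabilityMeasure_unif hΔ
  have hM := measurable_Mfun R L C Δ
  simp only [charFun_apply_real]
  rw [integral_map hM.aemeasurable (by fun_prop), integral_prod, ← integral_mul_const]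
  · refine integral_congr_ae (ae_of_all _ fun e => ?_)
    simp only
    rw [← integral_quantization_error hΔ
      (fun x => Complex.exp (((L * t : ℝ) : ℂ) * x * Complex.I)) (C * e), ← integral_const_mul]
    refine integral_congr_ae (ae_of_all _ fun d => ?_)
    simp only [← Complex.exp_add, Mfun]
    push_cast
    ring_nf
  · refine Integrable.of_bound (C := 1) (Measurable.aestronglyMeasurable (by fun_prop))
      (ae_of_all _ fun p => ?_)
    rw [← Complex.ofReal_mul, Complex.norm_exp_ofReal_mul_I]

/-- Existence of a stationary law for the first coordinate: the stationary law of
`x₊ = R x + L u`, convolved with the Gaussian of variance `v = W / (1 - R²)`, the solution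
of `v = R² v + W`. -/
theorem exists_stationary {R L C Δ W : ℝ} (hR : |R| < 1) (hW : 0 < W) (hΔ : 0 < Δ) :
    ∃ μ : Measure ℝ, IsProbabilityMeasure μ ∧
      ((μ.prod (unif Δ)).map (Mfun R L C Δ)) ∗ gaussianReal 0 W.toNNReal = μ := by
  have := isProbabilityMeasure_unif hΔ
  have hνp : IsProbabilityMeasure ((unif Δ).map fun x => L * x) :=
    Measure.isProbabilityMeasure_map (by fun_prop)
  have hν : ∀ᵐ x ∂((unif Δ).map fun x => L * x), |x| ≤ |L| * (Δ / 2) := by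
    rw [ae_map_iff (by fun_prop) (measurableSet_le (by fun_prop) (by fun_prop))]
    refine Measure.ae_smul_measure ?_ _
    filter_upwards [ae_restrict_mem measurableSet_Icc] with x hx
    rw [abs_mul]
    exact mul_le_mul_of_nonneg_left (abs_le.2 hx) (abs_nonneg L)
  obtain ⟨ρ, hρ, hρc⟩ := exists_charFun_eq_mul_comp _ hν hR
  have hR2 : 0 < 1 - R ^ 2 := by
    have := (sq_lt_one_iff_abs_lt_one R).2 hR
    linarith
  have hv : 0 ≤ W / (1 - R ^ 2) := by positivity
  have := Measure.isProbabilityMeasure_map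
    (μ := (ρ ∗ gaussianReal 0 (W / (1 - R ^ 2)).toNNReal).prod (unif Δ))
    (measurable_Mfun R L C Δ).aemeasurable
  refine ⟨ρ ∗ gaussianReal 0 (W / (1 - R ^ 2)).toNNReal, inferInstance, Measure.ext_of_charFun ?_⟩
  ext t
  rw [charFun_conv, charFun_map_Mfun hΔ, charFun_conv, charFun_conv, hρc t, charFun_map_mul]
  simp only [charFun_gaussianReal, Real.coe_toNNReal _ hv, Real.coe_toNNReal _ hW.le]
  have key : Complex.exp (((R * t : ℝ) : ℂ) * ((0 : ℝ) : ℂ) * Complex.I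
        - ((W / (1 - R ^ 2) : ℝ) : ℂ) * ((R * t : ℝ) : ℂ) ^ 2 / 2)
      * Complex.exp ((t : ℂ) * ((0 : ℝ) : ℂ) * Complex.I - (W : ℂ) * (t : ℂ) ^ 2 / 2)
      = Complex.exp ((t : ℂ) * ((0 : ℝ) : ℂ) * Complex.I
        - ((W / (1 - R ^ 2) : ℝ) : ℂ) * (t : ℂ) ^ 2 / 2) := by
    rw [← Complex.exp_add]
    congr 1
    have h : W / (1 - R ^ 2) * R ^ 2 + W = W / (1 - R ^ 2) := by field_simp; ring
    have h' : ((W / (1 - R ^ 2) : ℝ) : ℂ) * (R : ℂ) ^ 2 + W = ((W / (1 - R ^ 2) : ℝ) : ℂ) := by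
      exact_mod_cast h
    rw [Complex.ofReal_mul, Complex.ofReal_zero]
    linear_combination (-(t : ℂ) ^ 2 / 2) * h'
  rw [← key]
  ring

/-- Adding independent centred Gaussian noise to `M` amounts to mixing the Gaussians of mean `M p`. -/
theorem map_conv_gaussianReal_apply (η : Measure (ℝ × ℝ)) [IsProbabilityMeasure η]
    {M : ℝ × ℝ → ℝ} (hM : Measurable M) (w : ℝ≥0) {s : Set ℝ} (hs : MeasurableSet s) :
    ((η.map M) ∗ gaussianReal 0 w) s = ∫⁻ p, gaussianReal (M p) w s ∂η := by
  have hadd : Measurable fun x : ℝ × ℝ => x.1 + x.2 := by fun_prop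
  rw [Measure.conv, Measure.map_apply hadd hs, Measure.prod_apply (hadd hs),
    lintegral_map (measurable_measure_prodMk_left (hadd hs)) hM]
  refine lintegral_congr fun p => ?_
  have : gaussianReal (M p) w = (gaussianReal 0 w).map (M p + ·) := by
    rw [gaussianReal_map_const_add, zero_add]
  rw [this, Measure.map_apply (by fun_prop) hs]
  rfl

theorem measurable_gaussianPDF_mean {M : ℝ × ℝ → ℝ} (hM : Measurable M) (w : ℝ≥0) :
    Measurable fun z : ℝ × ℝ × ℝ => gaussianPDF (M z.2) w z.1 :=
  have h : Measurable fun z : ℝ × ℝ × ℝ => (M z.2, w, z.1) :=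
    (hM.comp measurable_snd).prodMk (measurable_const.prodMk measurable_fst)
  measurable_uncurry_gaussianPDF.comp h

/-- A mixture of Gaussians of variance `w ≠ 0` has the mixture of the Gaussian densities as density. -/
theorem lintegral_gaussianReal_eq_withDensity (η : Measure (ℝ × ℝ)) [IsProbabilityMeasure η]
    {M : ℝ × ℝ → ℝ} (hM : Measurable M) {w : ℝ≥0} (hw : w ≠ 0) {s : Set ℝ}
    (hs : MeasurableSet s) :
    ∫⁻ p, gaussianReal (M p) w s ∂η =
      volume.withDensity (fun y => ∫⁻ p, gaussianPDF (M p) w y ∂η) s := by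
  rw [withDensity_apply _ hs, lintegral_lintegral_swap]
  · exact lintegral_congr fun p => gaussianReal_apply _ hw s
  · exact (measurable_gaussianPDF_mean hM w).aemeasurable

theorem measurable_gaussianMixture (η : Measure (ℝ × ℝ)) [IsProbabilityMeasure η]
    {M : ℝ × ℝ → ℝ} (hM : Measurable M) (w : ℝ≥0) :
    Measurable fun y => ∫⁻ p, gaussianPDF (M p) w y ∂η :=
  (measurable_gaussianPDF_mean hM w).lintegral_prod_right'

theorem gaussianMixture_pos (η : Measure (ℝ × ℝ)) [IsProbabilityMeasure η]
    {M : ℝ × ℝ → ℝ} (hM : Measurable M) {w : ℝ≥0} (hw : w ≠ 0) (y : ℝ) :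
    0 < ∫⁻ p, gaussianPDF (M p) w y ∂η := by
  have hyM : Measurable fun p => (M p, w, y) := by fun_prop
  have hy : Measurable fun p => gaussianPDF (M p) w y :=
    measurable_uncurry_gaussianPDF.comp hyM
  refine (lintegral_pos_iff_support hy).2 ?_
  have : Function.support (fun p => gaussianPDF (M p) w y) = univ :=
    Set.eq_univ_of_forall fun p => (gaussianPDF_pos _ hw y).ne'
  rw [this, measure_univ]
  exact zero_lt_one

theorem exists_invariant_measure_equivalent_to_lebesgue
    (R L C Δ W : ℝ) (hR : |R| < 1) (hW : 0 < W) (hΔ : 0 < Δ)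
    (κ : Kernel (ℝ × ℝ) (ℝ × ℝ))
    (hκ : ∀ p : ℝ × ℝ,
      κ p = (gaussianReal (Mfun R L C Δ p) W.toNNReal).prod (unif Δ))
 :
    ∃ pm : Measure (ℝ × ℝ), IsProbabilityMeasure pm
      ∧ pm.bind (fun p => κ p) = pm
      ∧ (∃ g : ℝ × ℝ → ℝ≥0∞, (∀ p ∈ stateSet Δ, 0 < g p)
          ∧ pm = (lebS Δ).withDensity g)
      ∧ pm ≪ lebS Δ ∧ lebS Δ ≪ pm := by
  have := isProbabilityMeasure_unif hΔ
  have hM := measurable_Mfun R L C Δ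
  have hw : W.toNNReal ≠ 0 := by simpa using hW
  obtain ⟨μ, hμ, hstat⟩ := exists_stationary (C := C) (L := L) hR hW hΔ
  set pm : Measure (ℝ × ℝ) := μ.prod (unif Δ) with hpm
  set h : ℝ → ℝ≥0∞ := fun y => ∫⁻ p, gaussianPDF (Mfun R L C Δ p) W.toNNReal y ∂pm
  have hbind : ∀ s, MeasurableSet s →
      ∫⁻ p, gaussianReal (Mfun R L C Δ p) W.toNNReal s ∂pm = μ s := fun s hs => by
    rw [← map_conv_gaussianReal_apply pm hM _ hs, hstat]
  have hdens : μ = volume.withDensity h := by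
    ext s hs
    rw [← hbind s hs, lintegral_gaussianReal_eq_withDensity pm hM hw hs]
  have hhm : Measurable h := measurable_gaussianMixture pm hM _
  have hhpos : ∀ y, 0 < h y := gaussianMixture_pos pm hM hw
  set g : ℝ × ℝ → ℝ≥0∞ := fun p => (ENNReal.ofReal Δ)⁻¹ * h p.1
  have hgm : Measurable g := (hhm.comp measurable_fst).const_mul _
  have hgpos : ∀ p, 0 < g p := fun p =>
    ENNReal.mul_pos (ENNReal.inv_ne_zero.2 ENNReal.ofReal_ne_top) (hhpos p.1).ne'
  have hpmg : pm = (lebS Δ).withDensity g := by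
    have e : g = (ENNReal.ofReal Δ)⁻¹ • fun p : ℝ × ℝ => h p.1 := rfl
    rw [e, withDensity_smul _ (f := fun p : ℝ × ℝ => h p.1) (hhm.comp measurable_fst), lebS,
      ← prod_withDensity_left hhm, ← hdens, hpm, unif, Measure.prod_smul_right]
  refine ⟨pm, inferInstance, ?_, ⟨g, fun p _ => hgpos p, hpmg⟩, ?_, ?_⟩
  · refine (Measure.prod_eq fun s t hs ht => ?_).symm
    rw [Measure.bind_apply (hs.prod ht) κ.measurable.aemeasurable]
    simp_rw [hκ, Measure.prod_prod]
    -- the mass that the first marginal of `κ p` gives to `s` is `κ p (s ×ˢ univ)`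
    have hm : Measurable fun p => gaussianReal (Mfun R L C Δ p) W.toNNReal s := by
      simpa [hκ, Measure.prod_prod] using κ.measurable_coe (hs.prod MeasurableSet.univ)
    rw [lintegral_mul_const _ hm, hbind s hs]
  · rw [hpmg]
    exact withDensity_absolutelyContinuous _ _
  · rw [hpmg]
    exact withDensity_absolutelyContinuous' hgm.aemeasurable (ae_of_all _ fun p => (hgpos p).ne')
end
end

section
/- Consider the Markov kernel κ on S = ℝ × [−Δ/2, Δ/2] defined below, with |R| < 1, W > 0, Δ > 0. For every Borel set F ⊆ S with positive Lebesgue measure and every initial state (e₀, d₀) ∈ S, there exists ε > 0 (depending on F and (e₀, d₀) but not on n) such that the n-step transition probability satisfies κⁿ((e₀, d₀), F) ≥ ε for all integers n ≥ 1. Consequently, for every increasing sequence of positive integers n₁ < n₂ < ⋯, the series Σ_i κ^{n_i}((e₀, d₀), F) diverges, so no Borel set of positive Lebesgue measure is weakly transient for κ. -/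
/-!
The quantization error is bounded by `Δ / 2`, so `|M(e, d)| ≤ |R| |e| + |L| Δ / 2`. As `|R| < 1`,
the first absolute moment of `e_n` stays below a constant `k` for all `n`
(`exists_moment_bound`), and Markov's inequality keeps the chain in `{|e| < 2k}` with probability
at least `1/2` at every time. From that strip the drift is bounded, so all one-step laws dominate
one fixed measure that is equivalent to Lebesgue measure on `S` (`minorMeasure_le`,
`lebS_ac_minorMeasure`). The mass this measure gives to `F`, halved, is a lower bound for
`κⁿ(p, F)` uniform in `n ≥ 1` (`exists_uniform_lower_bound`). The series then diverges at every
point of `S`, in particular on `F` itself, which is not Lebesgue null.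
-/

open MeasureTheory ProbabilityTheory Real Set Filter
open scoped ENNReal NNReal

noncomputable section

/-- `n`-step transition probability of the kernel `κ` started at the point `p`. -/
def nstep (κ : Kernel (ℝ × ℝ) (ℝ × ℝ)) (n : ℕ) (p : ℝ × ℝ) : Measure (ℝ × ℝ) :=
  (fun mm : Measure (ℝ × ℝ) => mm.bind (fun q => κ q))^[n] (Measure.dirac p)

theorem abs_Qd_sub_le {Δ : ℝ} (hΔ : 0 < Δ) (x : ℝ) : |Qd Δ x - x| ≤ Δ / 2 := by
  unfold Qd
  have h1 := Int.floor_le (x / Δ + 1 / 2)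
  have h2 := Int.lt_floor_add_one (x / Δ + 1 / 2)
  have hx : x = Δ * (x / Δ) := by field_simp
  generalize (⌊x / Δ + 1 / 2⌋ : ℝ) = k at *
  generalize x / Δ = y at *
  subst hx
  rw [abs_le]
  constructor <;> nlinarith

/-- The quantization error is at most `Δ / 2`, so `M` contracts `|e|` up to a constant. -/
theorem abs_Mfun_le (R L C : ℝ) {Δ : ℝ} (hΔ : 0 < Δ) (p : ℝ × ℝ) :
    |Mfun R L C Δ p| ≤ |R| * |p.1| + |L| * (Δ / 2) := by
  unfold Mfun
  refine (abs_sub _ _).trans ?_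
  rw [abs_mul, abs_mul, show Qd Δ (C * p.1 + p.2) - p.2 - C * p.1
    = Qd Δ (C * p.1 + p.2) - (C * p.1 + p.2) by ring]
  gcongr
  exact abs_Qd_sub_le hΔ _

theorem lintegral_enorm_gaussianReal_le (μ : ℝ) (v : ℝ≥0) :
    ∫⁻ x, ‖x‖ₑ ∂(gaussianReal μ v) ≤ ‖μ‖ₑ + ∫⁻ x, ‖x‖ₑ ∂(gaussianReal 0 v) := by
  have h : gaussianReal μ v = (gaussianReal 0 v).map (· + μ) := by
    rw [gaussianReal_map_add_const, zero_add]
  rw [h, lintegral_map (by fun_prop) (by fun_prop)]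
  calc ∫⁻ x, ‖x + μ‖ₑ ∂(gaussianReal 0 v)
      ≤ ∫⁻ x, (‖μ‖ₑ + ‖x‖ₑ) ∂(gaussianReal 0 v) :=
        lintegral_mono fun x => by rw [add_comm x]; exact enorm_add_le _ _
    _ = _ := by rw [lintegral_add_left (by fun_prop)]; simp

theorem lintegral_enorm_gaussianReal_lt_top (v : ℝ≥0) :
    ∫⁻ x, ‖x‖ₑ ∂(gaussianReal 0 v) < ⊤ :=
  ((memLp_id_gaussianReal (μ := 0) (v := v) 1).integrable (by simp)).2

/-- A positive function lying below every Gaussian density of variance `v` whose mean is at most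
`A` in absolute value; it comes from `(x - μ)² ≤ 2 (x² + A²)`. -/
def minorant (A : ℝ) (v : ℝ≥0) (x : ℝ) : ℝ≥0∞ :=
  ENNReal.ofReal ((√(2 * π * v))⁻¹ * rexp (-(x ^ 2 + A ^ 2) / v))

theorem measurable_minorant (A : ℝ) (v : ℝ≥0) : Measurable (minorant A v) := by
  unfold minorant; fun_prop

theorem minorant_ne_zero (A : ℝ) {v : ℝ≥0} (hv : v ≠ 0) (x : ℝ) : minorant A v x ≠ 0 := by
  have hv' : (0 : ℝ) < v := by exact_mod_cast pos_iff_ne_zero.mpr hv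
  have : 0 < (√(2 * π * v))⁻¹ * rexp (-(x ^ 2 + A ^ 2) / v) := by positivity
  simpa [minorant] using this

theorem minorant_le {A μ : ℝ} {v : ℝ≥0} (hv : v ≠ 0) (hμ : |μ| ≤ A) (x : ℝ) :
    minorant A v x ≤ gaussianPDF μ v x := by
  have hv' : (0 : ℝ) < v := by exact_mod_cast pos_iff_ne_zero.mpr hv
  unfold minorant gaussianPDF gaussianPDFReal
  apply ENNReal.ofReal_le_ofReal
  gcongr ?_ * rexp ?_
  have h2 : μ ^ 2 ≤ A ^ 2 := sq_le_sq' (abs_le.mp hμ).1 (abs_le.mp hμ).2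
  rw [div_le_div_iff₀ hv' (by positivity)]
  nlinarith [sq_nonneg (x + μ)]

/-- The common component `minorant · dx ⊗ unif` of all one-step laws whose drift is at most `A`. -/
def minorMeasure (A : ℝ) (v : ℝ≥0) (Δ : ℝ) : Measure (ℝ × ℝ) :=
  (volume.withDensity (minorant A v)).prod (unif Δ)

theorem minorMeasure_le {A μ Δ : ℝ} {v : ℝ≥0} (hΔ : 0 < Δ) (hv : v ≠ 0) (hμ : |μ| ≤ A) :
    minorMeasure A v Δ ≤ (gaussianReal μ v).prod (unif Δ) := by
  have := isProbabilityMeasure_unif hΔ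
  unfold minorMeasure
  rw [gaussianReal_of_var_ne_zero _ hv]
  have h : volume.withDensity (minorant A v) ≤ volume.withDensity (gaussianPDF μ v) :=
    withDensity_mono (ae_of_all _ (minorant_le hv hμ))
  exact Measure.prod_mono h le_rfl

theorem lebS_ac_minorMeasure (A : ℝ) {v : ℝ≥0} (hv : v ≠ 0) {Δ : ℝ} (hΔ : 0 < Δ) :
    lebS Δ ≪ minorMeasure A v Δ := by
  have := isProbabilityMeasure_unif hΔ
  refine Measure.AbsolutelyContinuous.prod ?_ ?_
  · exact withDensity_absolutelyContinuous' (measurable_minorant A v).aemeasurable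
      (ae_of_all _ (minorant_ne_zero A hv))
  · exact Measure.absolutelyContinuous_smul (by simp)

theorem nstep_succ (κ : Kernel (ℝ × ℝ) (ℝ × ℝ)) (n : ℕ) (p : ℝ × ℝ) :
    nstep κ (n + 1) p = (nstep κ n p).bind (fun q => κ q) :=
  Function.iterate_succ_apply' _ _ _

theorem isProbabilityMeasure_nstep (κ : Kernel (ℝ × ℝ) (ℝ × ℝ))
    (hκ : ∀ q, IsProbabilityMeasure (κ q)) (n : ℕ) (p : ℝ × ℝ) :
    IsProbabilityMeasure (nstep κ n p) := by
  induction n with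
  | zero => unfold nstep; simp only [Function.iterate_zero, id]; infer_instance
  | succ n ih =>
    constructor
    rw [nstep_succ, Measure.bind_apply MeasurableSet.univ κ.measurable.aemeasurable]
    simp

section

variable {R L C Δ W : ℝ} {κ : Kernel (ℝ × ℝ) (ℝ × ℝ)}

theorem lintegral_enorm_fst_kernel_le (hΔ : 0 < Δ)
    (hκ : ∀ p : ℝ × ℝ,
      κ p = (gaussianReal (Mfun R L C Δ p) W.toNNReal).prod (unif Δ)) (p : ℝ × ℝ) :
    ∫⁻ q, ‖q.1‖ₑ ∂(κ p) ≤ ‖R‖ₑ * ‖p.1‖ₑ +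
      (ENNReal.ofReal (|L| * (Δ / 2)) + ∫⁻ x, ‖x‖ₑ ∂(gaussianReal 0 W.toNNReal)) := by
  have := isProbabilityMeasure_unif hΔ
  have h1 : ∫⁻ q, ‖q.1‖ₑ ∂(κ p)
      = ∫⁻ x, ‖x‖ₑ ∂(gaussianReal (Mfun R L C Δ p) W.toNNReal) := by
    rw [hκ p, lintegral_prod _ (by fun_prop)]
    simp
  rw [h1, ← add_assoc]
  refine (lintegral_enorm_gaussianReal_le _ _).trans ?_
  gcongr
  rw [Real.enorm_eq_ofReal_abs, Real.enorm_eq_ofReal_abs, Real.enorm_eq_ofReal_abs,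
    ← ENNReal.ofReal_mul (abs_nonneg _), ← ENNReal.ofReal_add (by positivity) (by positivity)]
  exact ENNReal.ofReal_le_ofReal (abs_Mfun_le R L C hΔ p)

/-- Since `|R| < 1`, the first absolute moments of `e_n` are bounded uniformly in `n`. -/
theorem exists_moment_bound (hR : |R| < 1) (hΔ : 0 < Δ)
    (hκ : ∀ p : ℝ × ℝ,
      κ p = (gaussianReal (Mfun R L C Δ p) W.toNNReal).prod (unif Δ)) (p : ℝ × ℝ) :
    ∃ k : ℝ, 0 < k ∧ ∀ n, ∫⁻ q, ‖q.1‖ₑ ∂(nstep κ n p) ≤ ENNReal.ofReal k := by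
  have hu := isProbabilityMeasure_unif hΔ
  have hprob : ∀ q, IsProbabilityMeasure (κ q) := fun q => by rw [hκ q]; infer_instance
  set m := (∫⁻ x, ‖x‖ₑ ∂(gaussianReal 0 W.toNNReal)).toReal with hm
  have hm' : ∫⁻ x, ‖x‖ₑ ∂(gaussianReal 0 W.toNNReal) = ENNReal.ofReal m :=
    (ENNReal.ofReal_toReal (lintegral_enorm_gaussianReal_lt_top _).ne).symm
  have hm0 : 0 ≤ m := ENNReal.toReal_nonneg
  have hB : 0 ≤ |L| * (Δ / 2) := by positivity
  set B := |L| * (Δ / 2) with hBdef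
  have h1R : 0 < 1 - |R| := by linarith
  -- `k` dominates `|e₀|` and the fixed point of the affine map `t ↦ |R| t + B + m`.
  set k := |p.1| + (B + m) / (1 - |R|) + 1 with hk
  have hdiv : 0 ≤ (B + m) / (1 - |R|) := by positivity
  have hkpos : 0 < k := by positivity
  have hfix : |R| * k + (B + m) ≤ k := by
    have h3 : (B + m) / (1 - |R|) ≤ k := by have := abs_nonneg p.1; linarith
    rw [div_le_iff₀ h1R] at h3
    linarith
  refine ⟨k, hkpos, fun n => ?_⟩
  induction n with
  | zero =>
    simp only [nstep, Function.iterate_zero, id]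
    rw [lintegral_dirac' _ (by fun_prop), Real.enorm_eq_ofReal_abs]
    exact ENNReal.ofReal_le_ofReal (by linarith)
  | succ n ih =>
    have := isProbabilityMeasure_nstep κ hprob n p
    rw [nstep_succ, Measure.lintegral_bind κ.measurable.aemeasurable (by fun_prop)]
    calc ∫⁻ a, ∫⁻ q, ‖q.1‖ₑ ∂(κ a) ∂(nstep κ n p)
        ≤ ∫⁻ a, (‖R‖ₑ * ‖a.1‖ₑ + (ENNReal.ofReal B + ENNReal.ofReal m)) ∂(nstep κ n p) := by
          refine lintegral_mono fun a => ?_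
          rw [← hm']
          exact lintegral_enorm_fst_kernel_le hΔ hκ a
      _ = ‖R‖ₑ * ∫⁻ a, ‖a.1‖ₑ ∂(nstep κ n p) + (ENNReal.ofReal B + ENNReal.ofReal m) := by
          rw [lintegral_add_left (by fun_prop), lintegral_const_mul _ (by fun_prop)]
          simp
      _ ≤ ‖R‖ₑ * ENNReal.ofReal k + (ENNReal.ofReal B + ENNReal.ofReal m) := by gcongr
      _ = ENNReal.ofReal (|R| * k + (B + m)) := by
          rw [Real.enorm_eq_ofReal_abs, ENNReal.ofReal_add (p := |R| * k) (by positivity) (by positivity),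
            ENNReal.ofReal_add hB hm0, ENNReal.ofReal_mul (abs_nonneg R)]
      _ ≤ ENNReal.ofReal k := ENNReal.ofReal_le_ofReal hfix

/-- By Markov's inequality, at every time the chain has `|e_n| < 2k` with probability at least
`1/2`; from such a state one further step charges `F` at least as much as `minorMeasure` does. -/
theorem exists_uniform_lower_bound (hR : |R| < 1) (hW : 0 < W) (hΔ : 0 < Δ)
    (hκ : ∀ p : ℝ × ℝ,
      κ p = (gaussianReal (Mfun R L C Δ p) W.toNNReal).prod (unif Δ))
    {F : Set (ℝ × ℝ)} (hF : MeasurableSet F) (hFpos : 0 < lebS Δ F) (p : ℝ × ℝ) :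
    ∃ ε : ℝ, 0 < ε ∧ ∀ n : ℕ, 1 ≤ n → ENNReal.ofReal ε ≤ nstep κ n p F := by
  have hu := isProbabilityMeasure_unif hΔ
  have hprob : ∀ q, IsProbabilityMeasure (κ q) := fun q => by rw [hκ q]; infer_instance
  have hv : W.toNNReal ≠ 0 := by simpa using hW
  obtain ⟨k, hk, hmom⟩ := exists_moment_bound hR hΔ hκ p
  set A := |R| * (2 * k) + |L| * (Δ / 2) with hA
  set δ := minorMeasure A W.toNNReal Δ F with hδ
  have hδ0 : δ ≠ 0 := fun h => hFpos.ne' (lebS_ac_minorMeasure A hv hΔ h)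
  have hA0 : |(0 : ℝ)| ≤ A := by rw [abs_zero]; positivity
  have hδ1 : δ ≠ ⊤ :=
    ((minorMeasure_le hΔ hv hA0 F).trans_lt (measure_lt_top _ F)).ne
  have hε : 2⁻¹ * δ ≠ ⊤ := ENNReal.mul_ne_top (by simp) hδ1
  refine ⟨(2⁻¹ * δ).toReal, ENNReal.toReal_pos (by simp [hδ0]) hε, fun n hn => ?_⟩
  rw [ENNReal.ofReal_toReal hε]
  obtain ⟨n, rfl⟩ := Nat.exists_eq_add_of_le' hn
  have := isProbabilityMeasure_nstep κ hprob n p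
  set G : Set (ℝ × ℝ) := {q | ENNReal.ofReal (2 * k) ≤ ‖q.1‖ₑ} with hG
  have hGm : MeasurableSet G := measurableSet_le measurable_const (by fun_prop)
  have hGle : nstep κ n p G ≤ 2⁻¹ := by
    refine (meas_ge_le_lintegral_div (by fun_prop) (by simpa using hk)
      ENNReal.ofReal_ne_top).trans ?_
    rw [ENNReal.div_le_iff (by simpa using hk) ENNReal.ofReal_ne_top,
      ENNReal.ofReal_mul (by norm_num), ← mul_assoc, ENNReal.ofReal_ofNat,
      ENNReal.inv_mul_cancel (by simp) (by simp), one_mul]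
    exact hmom n
  have hGc : 2⁻¹ ≤ nstep κ n p Gᶜ := by
    rw [prob_compl_eq_one_sub hGm]
    calc (2⁻¹ : ℝ≥0∞) = 1 - 2⁻¹ := ENNReal.one_sub_inv_two.symm
      _ ≤ _ := tsub_le_tsub_left hGle 1
  have hstep : ∀ q ∈ Gᶜ, δ ≤ κ q F := by
    intro q hq
    rw [hκ q]
    refine minorMeasure_le hΔ hv ?_ F
    have hq' : |q.1| ≤ 2 * k := by
      have h : ‖q.1‖ₑ < ENNReal.ofReal (2 * k) := by simpa [hG] using hq
      rw [Real.enorm_eq_ofReal_abs, ENNReal.ofReal_lt_ofReal_iff (by positivity)] at h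
      exact h.le
    refine (abs_Mfun_le R L C hΔ q).trans ?_
    rw [hA]
    gcongr
  rw [nstep_succ, Measure.bind_apply hF κ.measurable.aemeasurable]
  calc 2⁻¹ * δ ≤ δ * nstep κ n p Gᶜ := by rw [mul_comm]; gcongr
    _ = ∫⁻ _ in Gᶜ, δ ∂(nstep κ n p) := by rw [setLIntegral_const]
    _ ≤ ∫⁻ q in Gᶜ, κ q F ∂(nstep κ n p) := setLIntegral_mono' hGm.compl hstep
    _ ≤ ∫⁻ q, κ q F ∂(nstep κ n p) := setLIntegral_le_lintegral _ _

end

theorem nstep_uniformly_positive_no_weakly_transient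
    (R L C Δ W : ℝ) (hR : |R| < 1) (hW : 0 < W) (hΔ : 0 < Δ)
    (κ : Kernel (ℝ × ℝ) (ℝ × ℝ))
    (hκ : ∀ p : ℝ × ℝ,
      κ p = (gaussianReal (Mfun R L C Δ p) W.toNNReal).prod (unif Δ))
 :
    (∀ F : Set (ℝ × ℝ), MeasurableSet F → F ⊆ stateSet Δ → 0 < lebS Δ F →
      ∀ p ∈ stateSet Δ, ∃ ε : ℝ, 0 < ε ∧
        ∀ n : ℕ, 1 ≤ n → ENNReal.ofReal ε ≤ nstep κ n p F)
    ∧ (∀ F : Set (ℝ × ℝ), MeasurableSet F → F ⊆ stateSet Δ → 0 < lebS Δ F →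
        ∀ p ∈ stateSet Δ, ∀ ns : ℕ → ℕ, StrictMono ns → (∀ i, 1 ≤ ns i) →
          (∑' i : ℕ, nstep κ (ns i) p F) = ⊤)
    ∧ ¬ ∃ F : Set (ℝ × ℝ), MeasurableSet F ∧ F ⊆ stateSet Δ ∧ 0 < lebS Δ F ∧
        ∃ ns : ℕ → ℕ, StrictMono ns ∧ (∀ i, 1 ≤ ns i) ∧
          ∀ᵐ p ∂(lebS Δ), (∑' i : ℕ, nstep κ (ns i) p F) < ⊤ := by
  have key := fun (F : Set (ℝ × ℝ)) (hF : MeasurableSet F) (hpos : 0 < lebS Δ F) (p : ℝ × ℝ) =>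
    exists_uniform_lower_bound hR hW hΔ hκ hF hpos p
  have hdiv : ∀ F : Set (ℝ × ℝ), MeasurableSet F → 0 < lebS Δ F →
      ∀ p : ℝ × ℝ, ∀ ns : ℕ → ℕ, (∀ i, 1 ≤ ns i) → (∑' i : ℕ, nstep κ (ns i) p F) = ⊤ := by
    intro F hF hpos p ns hns
    obtain ⟨ε, hε, h⟩ := key F hF hpos p
    refine top_le_iff.mp ?_
    calc (⊤ : ℝ≥0∞) = ∑' _ : ℕ, ENNReal.ofReal ε :=
          (ENNReal.tsum_const_eq_top_of_ne_zero (by simpa using hε)).symm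
      _ ≤ _ := ENNReal.tsum_le_tsum fun i => h (ns i) (hns i)
  refine ⟨fun F hF _ hpos p _ => key F hF hpos p,
    fun F hF _ hpos p _ ns _ hns => hdiv F hF hpos p ns hns, ?_⟩
  rintro ⟨F, hF, -, hpos, ns, -, hns, hae⟩
  refine hpos.ne' (measure_mono_null (fun q _ => ?_) hae)
  simp [hdiv F hF hpos q ns hns]
end
end

section
/- Let A, C, W, Δ be reals with W > 0, Δ > 0, set V = Δ²/12, let P₊ > 0 satisfy the scalar discrete algebraic Riccati equation P₊ = A²·(P₊ − P₊²C²/(C²P₊ + V)) + W, define L = A·P₊·C/(C²P₊ + V) and R = A − L·C with |R| < 1, and define P̂ > 0 by P̂⁻¹ = P₊⁻¹ + C²/V. Let (e, d) be a random pair such that d is uniform on [−Δ/2, Δ/2], e is independent of d, E[e] = 0 and E[e²] = P₊, and let q = Q_Δ(C·e + d). Then the conditional Shannon entropy satisfies H(q | d) ≤ (1/2)·log₂(P₊/P̂) + (1/2)·log₂(2πe/12) bits, and the unconditional entropy satisfies H(q) ≤ (1/2)·log₂(P₊/P̂) + (1/2)·log₂(2πe/12) + 1 bits. -/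
/-!
Put `Z = C e` and let `N` be uniform on a cell of length `Δ`, independent of `Z`. Given `d = t`, the
output equals `kΔ` with probability `Δ f(kΔ - t)`, where `f` is the density of `Z + N`. Averaging the
conditional entropy over `t` in one cell and summing over `k` unfolds to an integral over the line
(`lintegral_cell_tsum`), whence `H(q | d) = h(Z + N) - log Δ`. The density of `Z + N` has second
moment at most `C² P₊ + Δ²/12`, so Gibbs' inequality against a centred Gaussian
(`lintegral_negMulLog_smear_le`) bounds this by `(1/2) log (2πe (C² P₊ + Δ²/12) / Δ²)`. Since
`P₊ / P̂ = (C² P₊ + V) / V` with `V = Δ²/12`, this is the first bound.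

For the unconditional entropy the same argument is applied to the lattice-valued `q` in place of `Z`:
the density of `q + N` is constant on cells, so `h(q + N) - log Δ = H(q)` (`entBits_le`). For fixed
`z`, the dithered output `Q(z + d)` takes only the two lattice points around `z` and has mean `z`, so
its variance is at most `Δ²/4` (`lintegral_Qd_sq_le`). Hence `E[(q + N)²] ≤ C² P₊ + Δ²/4 + Δ²/12 ≤
4 (C² P₊ + V)`, and the factor `4` costs exactly one bit.

The sums over the lattice and the averages over the dither run in `ℝ≥0∞`, which avoids proving
summability and integrability of the entropies.
-/


open MeasureTheory ProbabilityTheory Real Set Filter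
open scoped ENNReal NNReal

noncomputable section

/-- Shannon entropy (in bits) of a discrete measure. -/
def measEntBits {α : Type*} [MeasurableSpace α] (ν : Measure α) : ℝ :=
  ∑' a : α, -((ν {a}).toReal * Real.logb 2 (ν {a}).toReal)

/-- Shannon entropy (in bits) of a random variable. -/
def entBits {Ω α : Type*} [MeasurableSpace Ω] [MeasurableSpace α]
    (μ : Measure Ω) (X : Ω → α) : ℝ :=
  measEntBits (μ.map X)

/-- Conditional Shannon entropy (in bits) of `X` given `Y`, defined through the regular
conditional distribution of `X` given `Y`. -/
def condEntBits {Ω α β : Type*} [MeasurableSpace Ω] [MeasurableSpace α]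
    [StandardBorelSpace α] [Nonempty α] [MeasurableSpace β]
    (μ : Measure Ω) [IsFiniteMeasure μ] (X : Ω → α) (Y : Ω → β) : ℝ :=
  ∫ ω, measEntBits (condDistrib X Y μ (Y ω)) ∂μ


/-! ### The smeared density -/

/-- The probability `x ↦ P(Y - Δ/2 ≤ x < Y + Δ/2)`. It equals `Δ` times the
density of `Y + N`, where `N` is uniform on an interval of length `Δ` and independent of `Y`. -/
def smear {Ω : Type*} [MeasurableSpace Ω] (μ : Measure Ω) (Δ : ℝ) (Y : Ω → ℝ) (x : ℝ) : ℝ :=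
  (μ {ω | Y ω - Δ / 2 ≤ x ∧ x < Y ω + Δ / 2}).toReal

lemma smear_nonneg {Ω : Type*} [MeasurableSpace Ω] {μ : Measure Ω} (Δ : ℝ) (Y : Ω → ℝ) (x : ℝ) :
    0 ≤ smear μ Δ Y x := ENNReal.toReal_nonneg

section Smear

variable {Ω : Type*} [MeasurableSpace Ω] {μ : Measure Ω} [IsProbabilityMeasure μ]

lemma measurableSet_smear {Δ : ℝ} {Y : Ω → ℝ} (hY : Measurable Y) :
    MeasurableSet {p : ℝ × Ω | Y p.2 - Δ / 2 ≤ p.1 ∧ p.1 < Y p.2 + Δ / 2} := by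
  apply MeasurableSet.inter
  · exact measurableSet_le ((hY.comp measurable_snd).sub_const _) measurable_fst
  · exact measurableSet_lt measurable_fst ((hY.comp measurable_snd).add_const _)

lemma measurable_smear {Δ : ℝ} {Y : Ω → ℝ} (hY : Measurable Y) :
    Measurable (smear μ Δ Y) :=
  (measurable_measure_prodMk_left (ν := μ) (measurableSet_smear (Δ := Δ) hY)).ennreal_toReal

lemma smear_le_one (Δ : ℝ) (Y : Ω → ℝ) (x : ℝ) : smear μ Δ Y x ≤ 1 := by
  unfold smear
  exact measureReal_le_one

/-- Integrals against `smear` by Tonelli: average over the cell centred at `Y`, then over `Y`. -/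
lemma lintegral_mul_smear {Δ : ℝ} {Y : Ω → ℝ} (hY : Measurable Y) {h : ℝ → ℝ≥0∞}
    (hh : Measurable h) :
    ∫⁻ x, h x * ENNReal.ofReal (smear μ Δ Y x)
      = ∫⁻ ω, (∫⁻ x in Set.Ico (Y ω - Δ / 2) (Y ω + Δ / 2), h x) ∂μ := by
  set S := {p : ℝ × Ω | Y p.2 - Δ / 2 ≤ p.1 ∧ p.1 < Y p.2 + Δ / 2} with hS
  have hSm : MeasurableSet S := measurableSet_smear hY
  calc ∫⁻ x, h x * ENNReal.ofReal (smear μ Δ Y x)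
      = ∫⁻ x, ∫⁻ ω, S.indicator (fun p => h p.1) (x, ω) ∂μ := by
        refine lintegral_congr fun x => ?_
        have : (fun ω => S.indicator (fun p => h p.1) (x, ω))
            = ({ω | Y ω - Δ / 2 ≤ x ∧ x < Y ω + Δ / 2} : Set Ω).indicator (fun _ => h x) := by
          ext ω; simp [Set.indicator, hS]
        have hm : MeasurableSet ({ω | Y ω - Δ / 2 ≤ x ∧ x < Y ω + Δ / 2} : Set Ω) :=
          measurable_prodMk_left hSm
        rw [this, lintegral_indicator_const hm, smear,
          ENNReal.ofReal_toReal (measure_ne_top _ _)]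
    _ = ∫⁻ ω, (∫⁻ x, S.indicator (fun p => h p.1) (x, ω)) ∂μ := by
        apply lintegral_lintegral_swap
        exact ((hh.comp measurable_fst).indicator hSm).aemeasurable
    _ = _ := by
        refine lintegral_congr fun ω => ?_
        rw [← lintegral_indicator measurableSet_Ico]
        refine lintegral_congr fun x => ?_
        simp [Set.indicator, hS]

lemma lintegral_smear {Δ : ℝ} {Y : Ω → ℝ} (hY : Measurable Y) :
    ∫⁻ x, ENNReal.ofReal (smear μ Δ Y x) = ENNReal.ofReal Δ := by
  have := lintegral_mul_smear (μ := μ) (Δ := Δ) hY (h := fun _ => 1) measurable_const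
  simp only [one_mul] at this
  rw [this]
  simp only [lintegral_one, Measure.restrict_apply_univ, Real.volume_Ico]
  have h2 : ∀ ω, Y ω + Δ / 2 - (Y ω - Δ / 2) = Δ := fun ω => by ring
  simp [h2]

lemma lintegral_sq_Ico {a b : ℝ} (hab : a ≤ b) :
    ∫⁻ x in Set.Ico a b, ENNReal.ofReal (x ^ 2) = ENNReal.ofReal ((b ^ 3 - a ^ 3) / 3) := by
  rw [Measure.restrict_congr_set Ico_ae_eq_Ioc, ← ofReal_integral_eq_lintegral_ofReal]
  · rw [← intervalIntegral.integral_of_le hab, integral_pow]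
    norm_num
  · exact (continuous_pow 2).integrableOn_Ioc
  · exact Filter.Eventually.of_forall fun x => sq_nonneg x

/-- The density of `Y + N` has second moment `E[Y²] + Δ²/12`. -/
lemma lintegral_sq_smear {Δ s : ℝ} (hΔ : 0 < Δ) (hs : 0 ≤ s) {Y : Ω → ℝ} (hY : Measurable Y)
    (hYs : ∫⁻ ω, ENNReal.ofReal (Y ω ^ 2) ∂μ ≤ ENNReal.ofReal s) :
    ∫⁻ x, ENNReal.ofReal (x ^ 2 * smear μ Δ Y x) ≤ ENNReal.ofReal (Δ * (s + Δ ^ 2 / 12)) := by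
  have := lintegral_mul_smear (μ := μ) (Δ := Δ) hY (h := fun x => ENNReal.ofReal (x ^ 2))
    (by fun_prop)
  simp only [← ENNReal.ofReal_mul (sq_nonneg _)] at this
  rw [this]
  calc _ = ∫⁻ ω, (ENNReal.ofReal Δ * ENNReal.ofReal (Y ω ^ 2)
              + ENNReal.ofReal (Δ ^ 3 / 12)) ∂μ := by
        refine lintegral_congr fun ω => ?_
        rw [lintegral_sq_Ico (by linarith), ← ENNReal.ofReal_mul hΔ.le,
          ← ENNReal.ofReal_add (by positivity) (by positivity)]
        congr 1; ring
    _ = ENNReal.ofReal Δ * ∫⁻ ω, ENNReal.ofReal (Y ω ^ 2) ∂μ + ENNReal.ofReal (Δ ^ 3 / 12) := by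
        rw [lintegral_add_right _ measurable_const, lintegral_const_mul _ (by fun_prop)]
        simp
    _ ≤ ENNReal.ofReal Δ * ENNReal.ofReal s + ENNReal.ofReal (Δ ^ 3 / 12) := by gcongr
    _ = _ := by
        rw [← ENNReal.ofReal_mul hΔ.le, ← ENNReal.ofReal_add (by positivity) (by positivity)]
        congr 1; ring

/-! ### Maximum entropy -/

/-- Gibbs' inequality in pointwise form, with an unnormalised reference weight `exp (-a)`. -/
lemma negMulLog_le_gibbs {p : ℝ} (hp : 0 ≤ p) (a : ℝ) :
    Real.negMulLog p ≤ p * a + Real.exp (-a) - p := by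
  rcases hp.eq_or_lt with rfl | hp
  · simp [Real.exp_nonneg]
  · have h := Real.add_one_le_exp (-a - Real.log p)
    rw [Real.exp_sub, Real.exp_log hp, le_div_iff₀ hp] at h
    unfold Real.negMulLog
    linarith

/-- Gaussian maximum entropy bound, for the density `smear / Δ` of `Y + N`. -/
lemma lintegral_negMulLog_smear_le {Δ s : ℝ} (hΔ : 0 < Δ) (hs : 0 ≤ s) {Y : Ω → ℝ}
    (hY : Measurable Y)
    (hYs : ∫⁻ ω, ENNReal.ofReal (Y ω ^ 2) ∂μ ≤ ENNReal.ofReal s) :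
    ∫⁻ x, ENNReal.ofReal (Real.negMulLog (smear μ Δ Y x))
      ≤ ENNReal.ofReal (Δ * (1 / 2 * Real.log (2 * π * Real.exp 1 * (s + Δ ^ 2 / 12) / Δ ^ 2))) := by
  set S := s + Δ ^ 2 / 12 with hS
  have hSpos : 0 < S := by positivity
  set g := smear μ Δ Y with hg
  have hgm : Measurable g := measurable_smear hY
  have hg0 : ∀ x, 0 ≤ g x := smear_nonneg Δ Y
  have hg1 : ∀ x, g x ≤ 1 := smear_le_one Δ Y
  have l1 := lintegral_smear (μ := μ) (Δ := Δ) hY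
  have l2 := lintegral_sq_smear hΔ hs hY hYs
  rw [← hg] at l1 l2
  have i1 : Integrable g := by
    refine ⟨hgm.aestronglyMeasurable, ?_⟩
    rw [hasFiniteIntegral_iff_ofReal (Eventually.of_forall hg0), l1]
    exact ENNReal.ofReal_lt_top
  have i2 : Integrable (fun x => x ^ 2 * g x) := by
    refine ⟨by fun_prop, ?_⟩
    rw [hasFiniteIntegral_iff_ofReal (Eventually.of_forall fun x => mul_nonneg (sq_nonneg x) (hg0 x))]
    exact l2.trans_lt ENNReal.ofReal_lt_top
  have e1 : ∫ x, g x = Δ := by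
    rw [integral_eq_lintegral_of_nonneg_ae (Eventually.of_forall hg0) hgm.aestronglyMeasurable, l1,
      ENNReal.toReal_ofReal hΔ.le]
  have e2 : ∫ x, x ^ 2 * g x ≤ Δ * S := by
    rw [integral_eq_lintegral_of_nonneg_ae
      (Eventually.of_forall fun x => mul_nonneg (sq_nonneg x) (hg0 x)) (by fun_prop)]
    exact ENNReal.toReal_le_of_le_ofReal (by positivity) l2
  -- `exp (-(c + x ^ 2 / (2 * S)))` is `Δ` times the centred Gaussian density of variance `S`.
  set c := 1 / 2 * Real.log (2 * π * S / Δ ^ 2) with hc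
  have hexpc : Real.exp (-c) = Δ / √(2 * π * S) := by
    have : -c = Real.log (Δ / √(2 * π * S)) := by
      rw [Real.log_div hΔ.ne' (by positivity), Real.log_sqrt (by positivity), hc,
        Real.log_div (by positivity) (by positivity), Real.log_pow]
      push_cast; ring
    rw [this, Real.exp_log (by positivity)]
  have hφ : ∀ x : ℝ, Real.exp (-(c + x ^ 2 / (2 * S)))
      = Δ / √(2 * π * S) * Real.exp (-(1 / (2 * S)) * x ^ 2) := by
    intro x
    rw [← hexpc, ← Real.exp_add]
    congr 1; ring
  have i3 : Integrable (fun x : ℝ => Real.exp (-(c + x ^ 2 / (2 * S)))) := by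
    simp_rw [hφ]
    exact (integrable_exp_neg_mul_sq (by positivity)).const_mul _
  have e3 : ∫ x : ℝ, Real.exp (-(c + x ^ 2 / (2 * S))) = Δ := by
    simp_rw [hφ]
    rw [integral_const_mul, integral_gaussian]
    have : π / (1 / (2 * S)) = 2 * π * S := by field_simp
    rw [this]
    have : √(2 * π * S) ≠ 0 := by positivity
    field_simp
  have i4 : Integrable (fun x => c * g x + 1 / (2 * S) * (x ^ 2 * g x)) :=
    (i1.const_mul c).add (i2.const_mul _)
  have hpt : ∀ x, Real.negMulLog (g x)
      ≤ (c * g x + 1 / (2 * S) * (x ^ 2 * g x)) + Real.exp (-(c + x ^ 2 / (2 * S))) - g x := by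
    intro x
    refine (negMulLog_le_gibbs (hg0 x) (c + x ^ 2 / (2 * S))).trans_eq ?_
    ring
  have hn0 : ∀ x, 0 ≤ Real.negMulLog (g x) := fun x => Real.negMulLog_nonneg (hg0 x) (hg1 x)
  have i5 : Integrable (fun x => (c * g x + 1 / (2 * S) * (x ^ 2 * g x))
      + Real.exp (-(c + x ^ 2 / (2 * S)))) := i4.add i3
  have iR := i5.sub i1
  have iN : Integrable (fun x => Real.negMulLog (g x)) := by
    refine iR.mono' (Real.continuous_negMulLog.measurable.comp hgm).aestronglyMeasurable ?_
    refine Eventually.of_forall fun x => ?_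
    rw [Real.norm_of_nonneg (hn0 x)]
    exact hpt x
  rw [← ofReal_integral_eq_lintegral_ofReal iN (Eventually.of_forall hn0)]
  apply ENNReal.ofReal_le_ofReal
  calc ∫ x, Real.negMulLog (g x)
      ≤ ∫ x, ((c * g x + 1 / (2 * S) * (x ^ 2 * g x)) + Real.exp (-(c + x ^ 2 / (2 * S))) - g x) :=
        integral_mono iN iR hpt
    _ = c * Δ + 1 / (2 * S) * (∫ x, x ^ 2 * g x) + Δ - Δ := by
        rw [integral_sub i5 i1, integral_add i4 i3,
          integral_add (i1.const_mul c) (i2.const_mul _), integral_const_mul, integral_const_mul,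
          e1, e3]
    _ ≤ c * Δ + 1 / (2 * S) * (Δ * S) + Δ - Δ := by gcongr
    _ = Δ * (c + 1 / 2) := by field_simp; ring
    _ = _ := by
        have : 2 * π * Real.exp 1 * S / Δ ^ 2 = Real.exp 1 * (2 * π * S / Δ ^ 2) := by ring
        rw [this, Real.log_mul (Real.exp_ne_zero _) (by positivity), Real.log_exp, hc]
        ring

end Smear

/-! ### Unfolding over the lattice -/

/-- Unfolding: integrating over one cell and summing over lattice translates gives the integral over
the line. -/
lemma lintegral_cell_tsum {Δ : ℝ} (hΔ : 0 < Δ) {G : ℝ → ℝ≥0∞} (hG : Measurable G) :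
    ∫⁻ t in Set.Ico (-(Δ / 2)) (Δ / 2), ∑' k : ℤ, G (k * Δ + t) = ∫⁻ x, G x := by
  rw [lintegral_tsum fun k : ℤ =>
      (show Measurable fun t : ℝ => G (k * Δ + t) from
        hG.comp (measurable_const_add _)).aemeasurable,
    (isAddFundamentalDomain_Ioc hΔ (-(Δ / 2)) volume).lintegral_eq_tsum'' G,
    Measure.restrict_congr_set Ico_ae_eq_Ioc]
  have h : -(Δ / 2) + Δ = Δ / 2 := by ring
  have hinj : Function.Injective fun n : ℤ => n • Δ := by
    intro m n hmn
    simpa [hΔ.ne'] using hmn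
  rw [h]
  refine Eq.trans ?_ ((Equiv.ofInjective _ hinj).tsum_eq
    fun g : AddSubgroup.zmultiples Δ => ∫⁻ t in Set.Ioc (-(Δ / 2)) (Δ / 2), G (g +ᵥ t))
  refine tsum_congr fun k => lintegral_congr fun t => ?_
  change G (k * Δ + t) = G (k • Δ + t)
  rw [zsmul_eq_mul]

/-! ### The quantizer -/

lemma Qd_eq_iff {Δ : ℝ} (hΔ : 0 < Δ) (x : ℝ) (k : ℤ) :
    Qd Δ x = k * Δ ↔ k * Δ - Δ / 2 ≤ x ∧ x < k * Δ + Δ / 2 := by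
  have h1 : Qd Δ x = k * Δ ↔ ⌊x / Δ + 1 / 2⌋ = k := by
    unfold Qd
    rw [mul_comm, mul_left_inj' hΔ.ne', Int.cast_inj]
  have h2 : x / Δ + 1 / 2 = (x + Δ / 2) / Δ := by field_simp
  rw [h1, Int.floor_eq_iff, h2, le_div_iff₀ hΔ, div_lt_iff₀ hΔ]
  constructor <;> rintro ⟨h3, h4⟩ <;> constructor <;> linarith

lemma Qd_mem_range (Δ x : ℝ) : Qd Δ x ∈ Set.range fun k : ℤ => (k : ℝ) * Δ :=
  ⟨⌊x / Δ + 1 / 2⌋, mul_comm _ _⟩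

lemma measurable_Qd (Δ : ℝ) : Measurable (Qd Δ) := by
  unfold Qd
  fun_prop

/-- `E[Q(z + d)²] = z² + (z - m)(m + Δ - z)` where `m ≤ z < m + Δ` are the two lattice points
between which `Q(z + d)` chooses; the product is at most `Δ² / 4`. -/
lemma lintegral_Qd_sq_le {Δ : ℝ} (hΔ : 0 < Δ) (z : ℝ) :
    ∫⁻ t, ENNReal.ofReal (Qd Δ (z + t) ^ 2) ∂(unif Δ) ≤ ENNReal.ofReal (z ^ 2 + Δ ^ 2 / 4) := by
  set k := ⌊z / Δ⌋ with hk
  have hk1 : k * Δ ≤ z := by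
    rw [← le_div_iff₀ hΔ]; exact Int.floor_le _
  have hk2 : z < (k + 1) * Δ := by
    rw [← div_lt_iff₀ hΔ]; exact Int.lt_floor_add_one _
  -- the dither value at which the output switches from `k * Δ` to `(k + 1) * Δ`
  set c := k * Δ + Δ / 2 - z with hc
  have hc1 : -(Δ / 2) ≤ c := by linarith
  have hc2 : c ≤ Δ / 2 := by linarith
  have e1 : ∫⁻ t in Set.Ico (-(Δ / 2)) c, ENNReal.ofReal (Qd Δ (z + t) ^ 2)
      = ENNReal.ofReal ((k * Δ) ^ 2 * (c + Δ / 2)) := by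
    rw [setLIntegral_congr_fun (g := fun _ => ENNReal.ofReal ((k * Δ) ^ 2)) measurableSet_Ico]
    · rw [setLIntegral_const, Real.volume_Ico, ← ENNReal.ofReal_mul (by positivity)]
      congr 1; ring
    · intro t ht
      have : Qd Δ (z + t) = k * Δ := by
        rw [Qd_eq_iff hΔ]
        constructor <;> linarith [ht.1, ht.2]
      simp only [this]
  have e2 : ∫⁻ t in Set.Ico c (Δ / 2), ENNReal.ofReal (Qd Δ (z + t) ^ 2)
      = ENNReal.ofReal (((k + 1) * Δ) ^ 2 * (Δ / 2 - c)) := by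
    rw [setLIntegral_congr_fun (g := fun _ => ENNReal.ofReal (((k + 1) * Δ) ^ 2)) measurableSet_Ico]
    · rw [setLIntegral_const, Real.volume_Ico, ← ENNReal.ofReal_mul (by positivity)]
    · intro t ht
      have : Qd Δ (z + t) = (k + 1 : ℤ) * Δ := by
        rw [Qd_eq_iff hΔ]
        push_cast
        constructor <;> linarith [ht.1, ht.2]
      simp only [this]
      push_cast
      rfl
  rw [unif, lintegral_smul_measure, ← Measure.restrict_congr_set Ico_ae_eq_Icc,
    ← Set.Ico_union_Ico_eq_Ico hc1 hc2, lintegral_union measurableSet_Ico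
      (Set.Ico_disjoint_Ico_same), e1, e2,
    ← ENNReal.ofReal_add (mul_nonneg (sq_nonneg _) (by linarith))
      (mul_nonneg (sq_nonneg _) (by linarith)), ← ENNReal.ofReal_inv_of_pos hΔ, smul_eq_mul,
    ← ENNReal.ofReal_mul (by positivity)]
  apply ENNReal.ofReal_le_ofReal
  rw [inv_mul_le_iff₀ hΔ, hc]
  nlinarith [mul_nonneg hΔ.le (sq_nonneg (z - k * Δ - Δ / 2))]

/-! ### Entropy of lattice laws -/

lemma measEntBits_nonneg (ν : Measure ℝ) [IsProbabilityMeasure ν] : 0 ≤ measEntBits ν := by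
  refine tsum_nonneg fun a => ?_
  have := Real.negMulLog_nonneg (x := (ν {a}).toReal) ENNReal.toReal_nonneg measureReal_le_one
  rw [Real.negMulLog] at this
  rw [Real.logb, ← mul_div_assoc, ← neg_div, ← neg_mul]
  exact div_nonneg this (Real.log_nonneg one_le_two)

/-- Entropy of a law on the lattice `Δℤ` as a sum over `ℤ` in `ℝ≥0∞`. Only an inequality is claimed,
because a non-summable real series has the junk value `0`. -/
lemma ofReal_measEntBits_le {Δ : ℝ} (hΔ : 0 < Δ) (ν : Measure ℝ) [IsProbabilityMeasure ν]
    (hν : ∀ a, a ∉ Set.range (fun k : ℤ => (k : ℝ) * Δ) → ν {a} = 0) :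
    ENNReal.ofReal (measEntBits ν) ≤ ENNReal.ofReal (Real.log 2)⁻¹
      * ∑' k : ℤ, ENNReal.ofReal (Real.negMulLog (ν {(k : ℝ) * Δ}).toReal) := by
  have hl : 0 < Real.log 2 := Real.log_pos one_lt_two
  have hn : ∀ a, 0 ≤ Real.negMulLog (ν {a}).toReal := fun a =>
    Real.negMulLog_nonneg ENNReal.toReal_nonneg measureReal_le_one
  have h1 : measEntBits ν = (∑' a : ℝ, ENNReal.ofReal
      ((Real.log 2)⁻¹ * Real.negMulLog (ν {a}).toReal)).toReal := by
    rw [ENNReal.tsum_toReal_eq fun a => ENNReal.ofReal_ne_top]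
    refine tsum_congr fun a => ?_
    rw [ENNReal.toReal_ofReal (mul_nonneg (by positivity) (hn a)), Real.negMulLog, Real.logb]
    ring
  rw [h1]
  refine ENNReal.ofReal_toReal_le.trans_eq ?_
  simp_rw [ENNReal.ofReal_mul (inv_nonneg.mpr hl.le)]
  rw [ENNReal.tsum_mul_left]
  congr 1
  have hinj : Function.Injective fun k : ℤ => (k : ℝ) * Δ := by
    intro m n hmn
    simpa [hΔ.ne'] using hmn
  refine (hinj.tsum_eq ?_).symm
  intro a ha
  by_contra hna
  simp [hν a hna] at ha

lemma ofReal_integral_le_lintegral {Ω : Type*} [MeasurableSpace Ω] {μ : Measure Ω} {f : Ω → ℝ}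
    (hf : ∀ ω, 0 ≤ f ω) :
    ENNReal.ofReal (∫ ω, f ω ∂μ) ≤ ∫⁻ ω, ENNReal.ofReal (f ω) ∂μ := by
  by_cases h : Integrable f μ
  · rw [ofReal_integral_eq_lintegral_ofReal h (Eventually.of_forall hf)]
  · simp [integral_undef h]

/-! ### Entropy of the quantizer output -/

section Entropy

variable {Ω : Type*} [MeasurableSpace Ω] {μ : Measure Ω} [IsProbabilityMeasure μ]

/-- The differential entropy bound of `lintegral_negMulLog_smear_le`, averaged over one cell and
expressed in bits. -/
lemma cell_entropy_le {Δ s : ℝ} (hΔ : 0 < Δ) (hs : 0 ≤ s) {Y : Ω → ℝ} (hY : Measurable Y)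
    (hYs : ∫⁻ ω, ENNReal.ofReal (Y ω ^ 2) ∂μ ≤ ENNReal.ofReal s) :
    ∫⁻ t, ENNReal.ofReal (Real.log 2)⁻¹
        * ∑' k : ℤ, ENNReal.ofReal (Real.negMulLog (smear μ Δ Y (k * Δ + t))) ∂(unif Δ)
      ≤ ENNReal.ofReal (1 / 2 * Real.logb 2 (2 * π * Real.exp 1 * (s + Δ ^ 2 / 12) / Δ ^ 2)) := by
  have hl : 0 < Real.log 2 := Real.log_pos one_lt_two
  rw [unif, lintegral_smul_measure, ← Measure.restrict_congr_set Ico_ae_eq_Icc,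
    lintegral_const_mul' _ _ ENNReal.ofReal_ne_top,
    lintegral_cell_tsum hΔ (G := fun x => ENNReal.ofReal (Real.negMulLog (smear μ Δ Y x)))
      (Real.continuous_negMulLog.measurable.comp (measurable_smear hY)).ennreal_ofReal,
    ← ENNReal.ofReal_inv_of_pos hΔ, smul_eq_mul]
  refine (mul_le_mul_right (mul_le_mul_right
    (lintegral_negMulLog_smear_le hΔ hs hY hYs) _) _).trans_eq ?_
  rw [← ENNReal.ofReal_mul (by positivity), ← ENNReal.ofReal_mul (by positivity), Real.logb]
  congr 1
  field_simp

/-- Needed to compare real numbers through `ENNReal.ofReal`; it follows from `2πe ≥ 12`. -/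
lemma bound_nonneg {Δ s : ℝ} (hΔ : 0 < Δ) (hs : 0 ≤ s) :
    0 ≤ 1 / 2 * Real.logb 2 (2 * π * Real.exp 1 * (s + Δ ^ 2 / 12) / Δ ^ 2) := by
  apply mul_nonneg (by norm_num)
  apply Real.logb_nonneg one_lt_two
  rw [one_le_div (by positivity)]
  have h1 : 2 ≤ Real.exp 1 := by linarith [Real.add_one_le_exp 1]
  have h2 : 12 ≤ 2 * π * Real.exp 1 := by nlinarith [Real.pi_gt_three]
  nlinarith [sq_nonneg Δ]

/-- For a lattice-valued `q`, `smear` is constant on each cell, equal to the point mass there. -/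
lemma entBits_le {Δ s : ℝ} (hΔ : 0 < Δ) (hs : 0 ≤ s) {q : Ω → ℝ} (hq : Measurable q)
    (hql : ∀ ω, q ω ∈ Set.range fun k : ℤ => (k : ℝ) * Δ)
    (hqs : ∫⁻ ω, ENNReal.ofReal (q ω ^ 2) ∂μ ≤ ENNReal.ofReal s) :
    entBits μ q ≤ 1 / 2 * Real.logb 2 (2 * π * Real.exp 1 * (s + Δ ^ 2 / 12) / Δ ^ 2) := by
  have := Measure.isProbabilityMeasure_map (μ := μ) hq.aemeasurable
  rw [← ENNReal.ofReal_le_ofReal_iff (bound_nonneg hΔ hs), entBits]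
  refine (ofReal_measEntBits_le hΔ (μ.map q) ?_).trans (le_trans (le_of_eq ?_)
    (cell_entropy_le hΔ hs hq hqs))
  · intro a ha
    rw [Measure.map_apply hq (measurableSet_singleton a)]
    convert measure_empty (μ := μ)
    ext ω
    simp only [Set.mem_preimage, Set.mem_singleton_iff, Set.mem_empty_iff_false, iff_false]
    rintro rfl
    exact ha (hql ω)
  · rw [unif, lintegral_smul_measure, ← Measure.restrict_congr_set Ico_ae_eq_Icc,
      setLIntegral_congr_fun (g := fun _ => ENNReal.ofReal (Real.log 2)⁻¹
        * ∑' k : ℤ, ENNReal.ofReal (Real.negMulLog ((μ.map q) {(k : ℝ) * Δ}).toReal))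
        measurableSet_Ico]
    · rw [setLIntegral_const, Real.volume_Ico]
      have h : Δ / 2 - -(Δ / 2) = Δ := by ring
      have h0 : ENNReal.ofReal Δ ≠ 0 := by simpa using hΔ
      rw [h, smul_eq_mul, mul_comm _ (ENNReal.ofReal Δ), ← mul_assoc,
        ENNReal.inv_mul_cancel h0 ENNReal.ofReal_ne_top, one_mul]
    · intro t ht
      have : ∀ k : ℤ, smear μ Δ q (k * Δ + t) = ((μ.map q) {(k : ℝ) * Δ}).toReal := by
        intro k
        rw [smear, Measure.map_apply hq (measurableSet_singleton _)]
        congr 2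
        ext ω
        obtain ⟨j, hj⟩ := hql ω
        simp only [Set.mem_ofPred_eq, Set.mem_preimage, Set.mem_singleton_iff, ← hj]
        constructor
        · rintro ⟨h1, h2⟩
          have h3 : (j : ℝ) < k + 1 := by
            by_contra! h; nlinarith [ht.1, ht.2]
          have h4 : (k : ℝ) < j + 1 := by
            by_contra! h; nlinarith [ht.1, ht.2]
          have h5 : j < k + 1 := by exact_mod_cast h3
          have h6 : k < j + 1 := by exact_mod_cast h4
          have : j = k := by omega
          rw [this]
        · intro h
          rw [h]
          constructor <;> linarith [ht.1, ht.2]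
      simp only [this]

/-- Given `d = t`, the conditional law of `Q(Z + d)` is the law of `Q(Z + t)`. -/
lemma condDistrib_Qd {Δ : ℝ} {Z d : Ω → ℝ} (hZ : Measurable Z) (hd : Measurable d)
    (hi : IndepFun Z d μ) :
    ∀ᵐ t ∂(μ.map d), condDistrib (fun ω => Qd Δ (Z ω + d ω)) d μ t
      = μ.map (fun ω => Qd Δ (Z ω + t)) := by
  have hQ := measurable_Qd Δ
  have hf : Measurable fun p : ℝ × ℝ => Qd Δ (p.2 + p.1) := by fun_prop
  have := Measure.isProbabilityMeasure_map (μ := μ) hZ.aemeasurable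
  set κ : Kernel ℝ ℝ := (Kernel.id ×ₖ Kernel.const ℝ (μ.map Z)).map
    (fun p : ℝ × ℝ => Qd Δ (p.2 + p.1)) with hκ
  have : IsMarkovKernel κ := Kernel.IsMarkovKernel.map _ hf
  have hκt : ∀ t, κ t = μ.map (fun ω => Qd Δ (Z ω + t)) := by
    intro t
    rw [hκ, Kernel.map_apply _ hf, Kernel.prod_apply, Kernel.id_apply, Kernel.const_apply,
      Measure.dirac_prod, Measure.map_map hf (by fun_prop), Measure.map_map (by fun_prop) hZ]
    rfl
  have key := condDistrib_ae_eq_of_measure_eq_compProd (μ := μ)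
    (Y := fun ω => Qd Δ (Z ω + d ω)) d (by fun_prop) (κ := κ) ?_
  · filter_upwards [key] with t ht
    rw [ht, hκt]
  · have hp := (indepFun_iff_map_prod_eq_prod_map_map hd.aemeasurable hZ.aemeasurable).1 hi.symm
    have := Measure.isProbabilityMeasure_map (μ := μ) hd.aemeasurable
    refine Measure.ext_prod fun {s t} hs ht => ?_
    rw [Measure.compProd_apply_prod hs ht, Measure.map_apply (by fun_prop) (hs.prod ht)]
    have hm : MeasurableSet {p : ℝ × ℝ | p.1 ∈ s ∧ Qd Δ (p.2 + p.1) ∈ t} :=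
      (measurable_fst hs).inter (hf ht)
    have : (fun ω => (d ω, Qd Δ (Z ω + d ω))) ⁻¹' s ×ˢ t
        = (fun ω => (d ω, Z ω)) ⁻¹' {p : ℝ × ℝ | p.1 ∈ s ∧ Qd Δ (p.2 + p.1) ∈ t} := rfl
    rw [this, ← Measure.map_apply (by fun_prop) hm, hp, Measure.prod_apply hm,
      ← lintegral_indicator hs]
    refine lintegral_congr fun x => ?_
    by_cases hx : x ∈ s
    · rw [Set.indicator_of_mem hx, hκt, Measure.map_apply (by fun_prop) ht,
        Measure.map_apply hZ (measurable_prodMk_left hm)]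
      congr 1
      ext ω
      simp [hx]
    · simp [hx]

/-- `P(Q(Z + d) = kΔ | d = t) = smear (-Z) (t - kΔ)`, so averaging the conditional entropy over `t` in
a cell unfolds to an integral over the line. -/
lemma condEntBits_le {Δ s : ℝ} (hΔ : 0 < Δ) (hs : 0 ≤ s) {Z d : Ω → ℝ} (hZ : Measurable Z)
    (hd : Measurable d) (hi : IndepFun Z d μ) (hdu : μ.map d = unif Δ)
    (hZs : ∫⁻ ω, ENNReal.ofReal (Z ω ^ 2) ∂μ ≤ ENNReal.ofReal s) :
    condEntBits μ (fun ω => Qd Δ (Z ω + d ω)) d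
      ≤ 1 / 2 * Real.logb 2 (2 * π * Real.exp 1 * (s + Δ ^ 2 / 12) / Δ ^ 2) := by
  have hQ := measurable_Qd Δ
  rw [← ENNReal.ofReal_le_ofReal_iff (bound_nonneg hΔ hs), condEntBits]
  refine (ofReal_integral_le_lintegral fun ω => measEntBits_nonneg _).trans (le_trans ?_
    (cell_entropy_le (μ := μ) hΔ hs hZ.neg (by simpa using hZs)))
  have hG : Measurable fun t : ℝ => ENNReal.ofReal (Real.log 2)⁻¹
        * ∑' k : ℤ, ENNReal.ofReal
          (Real.negMulLog (smear μ Δ (fun ω => -Z ω) (k * Δ + t))) := by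
    refine Measurable.const_mul (Measurable.tsum fun k => ?_) _
    have h1 := Real.continuous_negMulLog.measurable.comp
      ((measurable_smear (μ := μ) (Δ := Δ) hZ.neg).comp (measurable_const_add ((k : ℝ) * Δ)))
    exact h1.ennreal_ofReal
  rw [← hdu]
  change _ ≤ ∫⁻ t, ENNReal.ofReal (Real.log 2)⁻¹
        * ∑' k : ℤ, ENNReal.ofReal
          (Real.negMulLog (smear μ Δ (fun ω => -Z ω) (k * Δ + t))) ∂(μ.map d)
  rw [lintegral_map hG hd]
  refine lintegral_mono_ae ?_
  filter_upwards [ae_of_ae_map hd.aemeasurable (condDistrib_Qd (Δ := Δ) hZ hd hi)] with ω hω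
  rw [hω]
  have hm : Measurable fun ω' => Qd Δ (Z ω' + d ω) := by fun_prop
  have := Measure.isProbabilityMeasure_map (μ := μ) hm.aemeasurable
  refine (ofReal_measEntBits_le hΔ _ ?_).trans_eq ?_
  · intro a ha
    rw [Measure.map_apply hm (measurableSet_singleton a)]
    convert measure_empty (μ := μ)
    ext ω'
    simp only [Set.mem_preimage, Set.mem_singleton_iff, Set.mem_empty_iff_false, iff_false]
    rintro rfl
    exact ha (Qd_mem_range _ _)
  · congr 1
    -- the event `Q(Z + t) = kΔ` is the event that `t - kΔ` lies in the cell centred at `-Z`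
    rw [← (Equiv.neg ℤ).tsum_eq]
    refine tsum_congr fun k => ?_
    congr 2
    rw [smear, Measure.map_apply hm (measurableSet_singleton _)]
    congr 2
    ext ω'
    simp only [Set.mem_preimage, Set.mem_singleton_iff, Set.mem_ofPred_eq, Qd_eq_iff hΔ,
      Equiv.neg_apply]
    push_cast
    constructor <;> rintro ⟨h1, h2⟩ <;> constructor <;> linarith

/-- Dithered quantization adds at most `Δ² / 4` to the second moment. -/
lemma lintegral_sq_Qd_le {Δ s : ℝ} (hΔ : 0 < Δ) (hs : 0 ≤ s) {Z d : Ω → ℝ} (hZ : Measurable Z)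
    (hd : Measurable d) (hi : IndepFun Z d μ) (hdu : μ.map d = unif Δ)
    (hZs : ∫⁻ ω, ENNReal.ofReal (Z ω ^ 2) ∂μ ≤ ENNReal.ofReal s) :
    ∫⁻ ω, ENNReal.ofReal (Qd Δ (Z ω + d ω) ^ 2) ∂μ ≤ ENNReal.ofReal (s + Δ ^ 2 / 4) := by
  have hQ := measurable_Qd Δ
  have hF : Measurable fun p : ℝ × ℝ => ENNReal.ofReal (Qd Δ (p.1 + p.2) ^ 2) := by fun_prop
  have hp := (indepFun_iff_map_prod_eq_prod_map_map hZ.aemeasurable hd.aemeasurable).1 hi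
  have := Measure.isProbabilityMeasure_map (μ := μ) hd.aemeasurable
  calc ∫⁻ ω, ENNReal.ofReal (Qd Δ (Z ω + d ω) ^ 2) ∂μ
      = ∫⁻ p, ENNReal.ofReal (Qd Δ (p.1 + p.2) ^ 2) ∂(μ.map fun ω => (Z ω, d ω)) :=
        (lintegral_map hF (hZ.prodMk hd)).symm
    _ = ∫⁻ z, ∫⁻ t, ENNReal.ofReal (Qd Δ (z + t) ^ 2) ∂(μ.map d) ∂(μ.map Z) := by
        rw [hp, lintegral_prod _ hF.aemeasurable]
    _ ≤ ∫⁻ z, ENNReal.ofReal (z ^ 2 + Δ ^ 2 / 4) ∂(μ.map Z) := by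
        rw [hdu]
        exact lintegral_mono fun z => lintegral_Qd_sq_le hΔ z
    _ = ∫⁻ ω, (ENNReal.ofReal (Z ω ^ 2) + ENNReal.ofReal (Δ ^ 2 / 4)) ∂μ := by
        rw [lintegral_map (by fun_prop) hZ]
        exact lintegral_congr fun ω => ENNReal.ofReal_add (sq_nonneg _) (by positivity)
    _ = (∫⁻ ω, ENNReal.ofReal (Z ω ^ 2) ∂μ) + ENNReal.ofReal (Δ ^ 2 / 4) := by
        rw [lintegral_add_right _ measurable_const]; simp
    _ ≤ ENNReal.ofReal s + ENNReal.ofReal (Δ ^ 2 / 4) := by gcongr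
    _ = _ := (ENNReal.ofReal_add hs (by positivity)).symm

end Entropy


/-! ### The entropy bounds -/

theorem ent_quantized_innovation_bounds
    {Ω : Type*} [MeasurableSpace Ω] (μ : Measure Ω) [IsProbabilityMeasure μ]
    (A C W Δ : ℝ) (hW : 0 < W) (hΔ : 0 < Δ)
    (V : ℝ) (hVdef : V = Δ ^ 2 / 12)
    (Pp : ℝ) (hPp : 0 < Pp)
    (hric : Pp = A ^ 2 * (Pp - Pp ^ 2 * C ^ 2 / (C ^ 2 * Pp + V)) + W)
    (L R : ℝ) (hL : L = A * Pp * C / (C ^ 2 * Pp + V)) (hRdef : R = A - L * C)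
    (hR : |R| < 1)
    (Ph : ℝ) (hPh : 0 < Ph) (hPhdef : Ph⁻¹ = Pp⁻¹ + C ^ 2 / V)
    (e d : Ω → ℝ) (hem : Measurable e) (hdm : Measurable d)
    (hdu : μ.map d = unif Δ) (hed : IndepFun e d μ)
    (hmean : (∫ ω, e ω ∂μ) = 0) (hvar : (∫ ω, (e ω) ^ 2 ∂μ) = Pp)
    (q : Ω → ℝ) (hq : ∀ ω, q ω = Qd Δ (C * e ω + d ω)) :
    condEntBits μ q d
      ≤ 1 / 2 * Real.logb 2 (Pp / Ph) + 1 / 2 * Real.logb 2 (2 * π * Real.exp 1 / 12)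
    ∧ entBits μ q
      ≤ 1 / 2 * Real.logb 2 (Pp / Ph) + 1 / 2 * Real.logb 2 (2 * π * Real.exp 1 / 12) + 1 := by
  obtain rfl : q = fun ω => Qd Δ (C * e ω + d ω) := funext hq
  have hQ := measurable_Qd Δ
  set s := C ^ 2 * Pp with hsdef
  have hs : 0 ≤ s := by positivity
  have hZ : Measurable fun ω => C * e ω := by fun_prop
  have hi : IndepFun (fun ω => C * e ω) d μ :=
    hed.comp (measurable_const_mul C) measurable_id
  -- the Bochner integral of `e ^ 2` is nonzero, hence not the junk value
  have he : Integrable (fun ω => e ω ^ 2) μ := by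
    by_contra h
    rw [integral_undef h] at hvar
    exact hPp.ne hvar
  have hZs : ∫⁻ ω, ENNReal.ofReal ((C * e ω) ^ 2) ∂μ ≤ ENNReal.ofReal s := by
    simp_rw [mul_pow, ENNReal.ofReal_mul (sq_nonneg C)]
    rw [lintegral_const_mul _ (by fun_prop), ← ofReal_integral_eq_lintegral_ofReal he
      (Eventually.of_forall fun ω => sq_nonneg _), hvar, hsdef, ENNReal.ofReal_mul (sq_nonneg C)]
  have hratio : Pp / Ph = (s + Δ ^ 2 / 12) / (Δ ^ 2 / 12) := by
    rw [div_eq_mul_inv, hPhdef, hVdef, hsdef]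
    field_simp
    ring
  have hB : 1 / 2 * Real.logb 2 (Pp / Ph) + 1 / 2 * Real.logb 2 (2 * π * Real.exp 1 / 12)
      = 1 / 2 * Real.logb 2 (2 * π * Real.exp 1 * (s + Δ ^ 2 / 12) / Δ ^ 2) := by
    rw [← mul_add, ← Real.logb_mul (by positivity) (by positivity), hratio]
    congr 2
    field_simp
  rw [hB]
  refine ⟨condEntBits_le hΔ hs hZ hdm hi hdu hZs, ?_⟩
  refine (entBits_le hΔ (by positivity) (by fun_prop) (fun ω => Qd_mem_range _ _)
    (lintegral_sq_Qd_le hΔ hs hZ hdm hi hdu hZs)).trans ?_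
  -- `s + Δ² / 4 + Δ² / 12 ≤ 4 (s + Δ² / 12)`, and a factor `4` costs one bit
  have h4 : (1 : ℝ) = 1 / 2 * Real.logb 2 4 := by
    have : (4 : ℝ) = 2 ^ (2 : ℕ) := by norm_num
    rw [this, Real.logb_pow, Real.logb_self_eq_one one_lt_two]
    norm_num
  nth_rewrite 5 [h4]
  rw [← mul_add, ← Real.logb_mul (by positivity) (by norm_num)]
  refine mul_le_mul_of_nonneg_left ?_ (by norm_num)
  refine Real.logb_le_logb_of_le one_lt_two (by positivity) ?_
  rw [div_mul_eq_mul_div]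
  refine div_le_div_of_nonneg_right ?_ (sq_nonneg Δ)
  have h : 0 ≤ 2 * π * Real.exp 1 := by positivity
  nlinarith [mul_nonneg h hs]
end
end
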